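/- arXiv:1504.06362 — 4 statements merged into one kernel-verified Lean document; each statement's English description precedes it below -/
import Mathlib

section
/- Let V and V' be simple left H-modules. If C(V) = C(V') as subspaces of the dual space H* = Hom_k(H,k), then V and V' are isomorphic as left H-modules. -/
/-!
A matrix coefficient of `V'` vanishes on the annihilator of finitely many vectors of `V'`, that is,
on the annihilator `I` of one vector `x` of a finite power `V'ⁿ`. Choose `v : V` and a functional
`f` with `f v ≠ 0`. If `h ↦ f (h • v)` lies in `C(V')`, then `f` vanishes on the submodule `I • v`
of the simple module `V`, which therefore is zero. Hence `h • x ↦ h • v` is a well-defined map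
`H • x → V`; as `V'ⁿ` is semisimple it extends to `V'ⁿ → V`, and the extension is nonzero on some
factor `V'`. By Schur's lemma its restriction to this factor is an isomorphism.
-/

noncomputable section

/-- The action of `H` on `v`, as a `k`-linear map `H →ₗ[k] V`. -/
def actOn (k H V : Type*) [Field k] [Ring H] [Algebra k H]
    [AddCommGroup V] [Module k V] [Module H V] [IsScalarTower k H V] (v : V) :
    H →ₗ[k] V where
  toFun h := h • v
  map_add' h h' := add_smul h h' v
  map_smul' c h := by simpa using smul_assoc c h v

/-- The matrix coefficient space `C(V) ⊆ H* = Hom_k(H, k)`: the span of the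
functionals `h ↦ f (h • v)` for `v : V`, `f : V →ₗ[k] k`. -/
def matCoeff (k H V : Type*) [Field k] [Ring H] [Algebra k H]
    [AddCommGroup V] [Module k V] [Module H V] [IsScalarTower k H V] :
    Submodule k (H →ₗ[k] k) :=
  Submodule.span k {φ | ∃ (v : V) (f : V →ₗ[k] k), φ = f ∘ₗ actOn k H V v}

theorem exists_finset_of_mem_matCoeff {k H V : Type*} [Field k] [Ring H] [Algebra k H]
    [AddCommGroup V] [Module k V] [Module H V] [IsScalarTower k H V]
    {φ : H →ₗ[k] k} (hφ : φ ∈ matCoeff k H V) :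
    ∃ s : Finset V, ∀ h : H, (∀ w ∈ s, h • w = 0) → φ h = 0 := by
  classical
  induction hφ using Submodule.span_induction with
  | mem φ hφ =>
    obtain ⟨v, f, rfl⟩ := hφ
    refine ⟨{v}, fun h hh => ?_⟩
    have : h • v = 0 := hh v (by simp)
    simp [actOn, this]
  | zero => exact ⟨∅, by simp⟩
  | add φ ψ _ _ h₁ h₂ =>
    obtain ⟨s, hs⟩ := h₁
    obtain ⟨t, ht⟩ := h₂
    refine ⟨s ∪ t, fun h hh => ?_⟩
    rw [LinearMap.add_apply, hs h fun w hw => hh w (Finset.mem_union_left _ hw),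
      ht h fun w hw => hh w (Finset.mem_union_right _ hw), add_zero]
  | smul c φ _ h₁ =>
    obtain ⟨s, hs⟩ := h₁
    exact ⟨s, fun h hh => by simp [hs h hh]⟩

/-- A simple module generated by a vector whose annihilator contains that of a vector in a finite
power of the simple module `V'` is isomorphic to `V'`. -/
theorem nonempty_equiv_of_annihilator_le {H V V' ι : Type*} [Ring H] [Finite ι]
    [AddCommGroup V] [Module H V] [AddCommGroup V'] [Module H V']
    [IsSimpleModule H V] [IsSimpleModule H V'] {v : V} (hv : v ≠ 0) (x : ι → V')
    (hx : ∀ h : H, h • x = 0 → h • v = 0) : Nonempty (V ≃ₗ[H] V') := by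
  classical
  let p := LinearMap.toSpanSingleton H (ι → V') x
  have hp : LinearMap.ker p ≤ LinearMap.ker (LinearMap.toSpanSingleton H V v) := fun h hh => by
    simpa using hx h (by simpa [p] using hh)
  obtain ⟨g, hg⟩ := IsSemisimpleModule.extension_property
    ((LinearMap.ker p).liftQ p le_rfl) (LinearMap.ker_eq_bot.1 (Submodule.ker_liftQ_eq_bot' _ p rfl))
    ((LinearMap.ker p).liftQ _ hp)
  have hgx : g x = v := by
    simpa [p] using LinearMap.congr_fun hg (Submodule.Quotient.mk 1)
  have hne : ∃ i, g ∘ₗ LinearMap.single H (fun _ : ι => V') i ≠ 0 := by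
    by_contra! hc
    have hg0 : g = 0 := LinearMap.pi_ext' fun i => by simpa using hc i
    exact hv (by rw [← hgx, hg0, LinearMap.zero_apply])
  obtain ⟨i, hi⟩ := hne
  exact ⟨(LinearEquiv.ofBijective _ (LinearMap.bijective_of_ne_zero hi)).symm⟩

/-- simple modules with the same matrix coefficient space are isomorphic. -/
theorem stmt0 (k H V V' : Type*) [Field k] [Ring H] [Algebra k H]
    [AddCommGroup V] [Module k V] [Module H V] [IsScalarTower k H V]
    [AddCommGroup V'] [Module k V'] [Module H V'] [IsScalarTower k H V']
    [IsSimpleModule H V] [IsSimpleModule H V']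
    (h : matCoeff k H V = matCoeff k H V') :
    Nonempty (V ≃ₗ[H] V') := by
  have := IsSimpleModule.nontrivial H V
  obtain ⟨v, hv⟩ := exists_ne (0 : V)
  obtain ⟨f, hf⟩ : ∃ f : V →ₗ[k] k, f v ≠ 0 := by
    by_contra! hc
    exact hv ((Module.forall_dual_apply_eq_zero_iff k v).1 hc)
  have hmem : f ∘ₗ actOn k H V v ∈ matCoeff k H V' :=
    h ▸ Submodule.subset_span ⟨v, f, rfl⟩
  obtain ⟨s, hs⟩ := exists_finset_of_mem_matCoeff hmem
  refine nonempty_equiv_of_annihilator_le hv (fun w : s => (w : V')) fun a ha => ?_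
  by_contra hav
  -- If `a • v ≠ 0`, simplicity gives `b • a • v = v`, while `b * a` still annihilates `s`.
  obtain ⟨b, hb⟩ := IsSimpleModule.toSpanSingleton_surjective H hav v
  refine hf ?_
  have hba := hs (b * a) fun w hw => by
    rw [mul_smul, show a • w = 0 from congr_fun ha ⟨w, hw⟩, smul_zero]
  have hb' : b • a • v = v := hb
  simpa [actOn, mul_smul, hb'] using hba
end
end

section
/- The following are equivalent: (i) every finite-dimensional left H-module is semisimple; (ii) for every finite-dimensional left H-module V, the matrix coefficient space C(V) is contained in the sum, over all (isomorphism classes of) simple finite-dimensional left H-modules S, of the subspaces C(S) ⊆ H*. -/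
/-!
Write a *semisimple functional* for a linear form `φ : H → k` that vanishes on some left ideal `I`
with `H ⧸ I` semisimple. These form a subspace of `H*`, because `H ⧸ (I ⊓ J)` embeds
in `(H ⧸ I) × (H ⧸ J)`, and it contains `C(S)` for every simple `S`, because `h ↦ h • s` identifies
a quotient of `H` with a submodule of `S`.

If every finite-dimensional module is semisimple, then each `v : V` is a sum of elements of simple
submodules, and the coefficients of `v` decompose accordingly. Conversely, if `C(V)` lies in the
sum of the `C(S)`, then all coefficients of `V` are semisimple functionals. For `v : V`, applying
this to the finitely many coordinate functions of a basis of `V` gives one left ideal `I` that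
kills `v` and has `H ⧸ I` semisimple. Hence `H • v`, a quotient of `H ⧸ I`, is semisimple, and `V`
is the sum of these cyclic submodules.
-/

noncomputable section

lemma isSemisimpleModule_prod (R M N : Type*) [Ring R] [AddCommGroup M] [Module R M]
    [AddCommGroup N] [Module R N] [IsSemisimpleModule R M] [IsSemisimpleModule R N] :
    IsSemisimpleModule R (M × N) := by
  have := IsSemisimpleModule.sup (R := R) (p := LinearMap.range (LinearMap.inl R M N))
    (q := LinearMap.range (LinearMap.inr R M N)) (.range _) (.range _)
  rw [LinearMap.sup_range_inl_inr] at this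
  exact .congr Submodule.topEquiv.symm

/-- The linear forms on `H` that vanish on a left ideal with semisimple quotient. -/
def semisimpleFunctionals (k H : Type*) [Field k] [Ring H] [Algebra k H] :
    Submodule k (H →ₗ[k] k) where
  carrier := {φ | ∃ I : Submodule H H, IsSemisimpleModule H (H ⧸ I) ∧ ∀ h ∈ I, φ h = 0}
  zero_mem' := ⟨⊤, isSemisimpleModule_of_isSemisimpleModule_submodule' (p := Empty.elim) nofun
    (Subsingleton.elim _ _), fun _ _ => rfl⟩
  smul_mem' := by
    rintro c φ ⟨I, hI, hφ⟩
    exact ⟨I, hI, fun h hh => by simp [hφ h hh]⟩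
  add_mem' := by
    rintro φ ψ ⟨I, hI, hφ⟩ ⟨J, hJ, hψ⟩
    have : IsSemisimpleModule H ((H ⧸ I) × (H ⧸ J)) := isSemisimpleModule_prod H _ _
    refine ⟨LinearMap.ker (I.mkQ.prod J.mkQ), ?_, fun h hh => ?_⟩
    · exact .congr (LinearMap.quotKerEquivRange (I.mkQ.prod J.mkQ))
    · rw [LinearMap.ker_prod, Submodule.ker_mkQ, Submodule.ker_mkQ] at hh
      simp [hφ h hh.1, hψ h hh.2]

lemma matCoeff_le_semisimpleFunctionals (k H S : Type*) [Field k] [Ring H] [Algebra k H]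
    [AddCommGroup S] [Module k S] [Module H S] [IsScalarTower k H S] [IsSemisimpleModule H S] :
    matCoeff k H S ≤ semisimpleFunctionals k H := by
  refine Submodule.span_le.2 ?_
  rintro _ ⟨s, f, rfl⟩
  refine ⟨LinearMap.ker (LinearMap.toSpanSingleton H S s),
    .congr (LinearMap.quotKerEquivRange _), fun h hh => ?_⟩
  have hs : h • s = 0 := by simpa using hh
  simp [actOn, hs]

lemma isSemisimpleModule_of_matCoeff_le (k H V : Type*) [Field k] [Ring H] [Algebra k H]
    [AddCommGroup V] [Module k V] [Module H V] [IsScalarTower k H V] [FiniteDimensional k V]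
    (hV : matCoeff k H V ≤ semisimpleFunctionals k H) : IsSemisimpleModule H V := by
  have cyclic (v : V) :
      IsSemisimpleModule H (LinearMap.range (LinearMap.toSpanSingleton H V v)) := by
    let b := Module.finBasis k V
    have hb (i) : b.coord i ∘ₗ actOn k H V v ∈ semisimpleFunctionals k H :=
      hV (Submodule.subset_span ⟨v, _, rfl⟩)
    choose I hI hφ using hb
    let π : H →ₗ[H] (i : _) → H ⧸ I i := LinearMap.pi fun i => (I i).mkQ
    have : IsSemisimpleModule H (H ⧸ LinearMap.ker π) :=
      .of_injective ((LinearMap.ker π).liftQ π le_rfl)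
        (LinearMap.ker_eq_bot.1 (Submodule.ker_liftQ_eq_bot _ _ _ le_rfl))
    have hker : LinearMap.ker π ≤ LinearMap.ker (LinearMap.toSpanSingleton H V v) := by
      intro h hh
      have hh' (i) : h ∈ I i := by
        rw [← Submodule.ker_mkQ (I i)]
        exact congrFun hh i
      have : h • v = 0 := b.ext_elem fun i => by simpa [actOn] using hφ i h (hh' i)
      simpa using this
    rw [← Submodule.range_liftQ _ _ hker]
    exact .range _
  refine isSemisimpleModule_of_isSemisimpleModule_submodule' cyclic (eq_top_iff.2 fun v _ => ?_)
  exact Submodule.mem_iSup_of_mem v ⟨1, by simp⟩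

/-- Matrix coefficients of a vector in a submodule are matrix coefficients of that submodule. -/
lemma comp_actOn_mem_matCoeff_submodule {k H V : Type*} [Field k] [Ring H] [Algebra k H]
    [AddCommGroup V] [Module k V] [Module H V] [IsScalarTower k H V] (S : Submodule H V)
    {v : V} (hv : v ∈ S) (f : V →ₗ[k] k) : f ∘ₗ actOn k H V v ∈ matCoeff k H S :=
  Submodule.subset_span ⟨⟨v, hv⟩, f ∘ₗ S.subtype.restrictScalars k, rfl⟩

universe u v

/-- every finite-dimensional `H`-module is semisimple iff every matrix
coefficient space `C(V)` of a finite-dimensional module is contained in the sum of the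
matrix coefficient spaces of the simple finite-dimensional modules. -/
theorem stmt4 (k H : Type u) [Field k] [Ring H] [Algebra k H] :
    (∀ (V : Type v) (_ : AddCommGroup V) (_ : Module k V) (_ : Module H V)
        (_ : IsScalarTower k H V), FiniteDimensional k V → IsSemisimpleModule H V) ↔
    (∀ (V : Type v) (iV : AddCommGroup V) (mV : Module k V) (hV : Module H V)
        (tV : IsScalarTower k H V), FiniteDimensional k V →
        matCoeff k H V ≤
          sSup {C : Submodule k (H →ₗ[k] k) |
            ∃ (S : Type v) (iS : AddCommGroup S) (mS : Module k S) (hS : Module H S)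
              (tS : IsScalarTower k H S),
              IsSimpleModule H S ∧ FiniteDimensional k S ∧
                C = @matCoeff k H S _ _ _ iS mS hS tS}) := by
  constructor
  · intro h V iV mV hV tV hfin
    have := h V iV mV hV tV hfin
    refine Submodule.span_le.2 ?_
    rintro _ ⟨v, f, rfl⟩
    have hv : v ∈ ⨆ S : {S : Submodule H V // IsSimpleModule H S}, S.1 := by
      have htop := IsSemisimpleModule.sSup_simples_eq_top H V
      rw [sSup_eq_iSup'] at htop
      exact htop.ge Submodule.mem_top
    induction hv using Submodule.iSup_induction' with
    | mem S v hv =>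
      have : FiniteDimensional k S.1 :=
        inferInstanceAs (FiniteDimensional k (S.1.restrictScalars k))
      refine Submodule.mem_sSup_of_mem ?_ (comp_actOn_mem_matCoeff_submodule S.1 hv f)
      exact ⟨S.1, _, _, _, inferInstance, S.2, this, rfl⟩
    | zero =>
      have : f ∘ₗ actOn k H V 0 = 0 := by ext; simp [actOn]
      rw [this]
      exact zero_mem _
    | add x y _ _ hx hy =>
      have : f ∘ₗ actOn k H V (x + y) = f ∘ₗ actOn k H V x + f ∘ₗ actOn k H V y := by
        ext; simp [actOn]
      rw [this]
      exact add_mem hx hy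
  · intro h V iV mV hV tV hfin
    refine isSemisimpleModule_of_matCoeff_le k H V ((h V iV mV hV tV hfin).trans (sSup_le ?_))
    rintro _ ⟨S, _, _, _, _, hS, -, rfl⟩
    exact matCoeff_le_semisimpleFunctionals k H S
end
end

section
/- Let H be a Hopf algebra over a field k, P = ΣP₁⊗P₂ ∈ H⊗H, and suppose there exists T = Σ t₁⊗t₂⊗t₃⊗t₄ ∈ H⊗H⊗H⊗H such that (Δ⊗id)(P) = Σ t₁P₁t₂ ⊗ t₃P₁'t₄ ⊗ P₂P₂' (where P = ΣP₁⊗P₂ = ΣP₁'⊗P₂' denote two independent copies of P and the sum is over all indices). Then for any H-sub-bimodules U, U' of H* (with respect to the bimodule action (a·φ·b)(x) = φ(bxa)), one has Φ_P(U * U') ⊆ Φ_P(U) · Φ_P(U'), where Φ_P(ξ) = Σ ξ(P₁)P₂, U * U' is the span of the convolution products φ*φ' with φ ∈ U, φ' ∈ U', and Φ_P(U)·Φ_P(U') is the span of products of elements of Φ_P(U) and Φ_P(U') in H. -/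
/-!
Write `T = ∑ t₁ ⊗ t₂ ⊗ t₃ ⊗ t₄`. Applying `φ ⊗ ψ ⊗ id` to the factorisation of `(Δ ⊗ id)(P)` turns the
left side into `Φ_P(φ * ψ)` (`PhiP_conv`) and the right side into
`∑ φ(t₁ P₁ t₂) ψ(t₃ P₁' t₄) P₂ P₂' = ∑ Φ_P(t₂ · φ · t₁) Φ_P(t₄ · ψ · t₃)` (`evalPair_lambdaT`).
Stability of `U` and `U'` under the bimodule action puts every summand in `Φ_P(U) Φ_P(U')`.
-/

open TensorProduct

noncomputable section

/-- The convolution product on `H*`. -/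
def conv (k H : Type*) [Field k] [Ring H] [Bialgebra k H]
    (φ ψ : H →ₗ[k] k) : H →ₗ[k] k :=
  LinearMap.mul' k k ∘ₗ TensorProduct.map φ ψ ∘ₗ Coalgebra.comul

/-- The `H`-bimodule action on `H*`: `(a · φ · b) x = φ (b * x * a)`. -/
def bimodAct (k H : Type*) [Field k] [Ring H] [Algebra k H]
    (a b : H) (φ : H →ₗ[k] k) : H →ₗ[k] k :=
  φ ∘ₗ LinearMap.mulLeft k b ∘ₗ LinearMap.mulRight k a

/-- `Φ_P(ξ) = (ξ ⊗ id)(P)`. -/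
def PhiP (k H : Type*) [Field k] [Ring H] [HopfAlgebra k H]
    (P : H ⊗[k] H) (ξ : H →ₗ[k] k) : H :=
  TensorProduct.lid k H (TensorProduct.map ξ LinearMap.id P)

/-- The map `((a ⊗ b) ⊗ (p ⊗ q)) ↦ (a * p * b) ⊗ q`. -/
def sandwichMul (k H : Type*) [Field k] [Ring H] [Algebra k H] :
    (H ⊗[k] H) ⊗[k] (H ⊗[k] H) →ₗ[k] H ⊗[k] H :=
  TensorProduct.map
      (LinearMap.mul' k H ∘ₗ TensorProduct.map (LinearMap.mul' k H) LinearMap.id)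
      LinearMap.id
    ∘ₗ (TensorProduct.assoc k (H ⊗[k] H) H H).symm.toLinearMap
    ∘ₗ (tensorTensorTensorComm k H H H H).toLinearMap

/-- The map sending `(t₁ ⊗ t₂ ⊗ t₃ ⊗ t₄) ⊗ ((P₁ ⊗ P₂) ⊗ (P₁' ⊗ P₂'))` to
`(t₁ P₁ t₂) ⊗ (t₃ P₁' t₄) ⊗ (P₂ P₂')`. -/
def lambdaT (k H : Type*) [Field k] [Ring H] [Algebra k H] :
    ((H ⊗[k] H) ⊗[k] (H ⊗[k] H)) ⊗[k] ((H ⊗[k] H) ⊗[k] (H ⊗[k] H)) →ₗ[k]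
      (H ⊗[k] H) ⊗[k] H :=
  TensorProduct.map LinearMap.id (LinearMap.mul' k H)
    ∘ₗ (tensorTensorTensorComm k H H H H).toLinearMap
    ∘ₗ TensorProduct.map (sandwichMul k H) (sandwichMul k H)
    ∘ₗ (tensorTensorTensorComm k (H ⊗[k] H) (H ⊗[k] H) (H ⊗[k] H) (H ⊗[k] H)).toLinearMap

section

variable (k H : Type*) [Field k] [Ring H] [HopfAlgebra k H]

/-- The map `φ ⊗ ψ ⊗ id`, that is `(x ⊗ y) ⊗ z ↦ φ x • ψ y • z`. -/
def evalPair (φ ψ : H →ₗ[k] k) : (H ⊗[k] H) ⊗[k] H →ₗ[k] H :=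
  (TensorProduct.lid k H).toLinearMap ∘ₗ
    TensorProduct.map (LinearMap.mul' k k ∘ₗ TensorProduct.map φ ψ) LinearMap.id

theorem PhiP_conv (P : H ⊗[k] H) (φ ψ : H →ₗ[k] k) :
    PhiP k H P (conv k H φ ψ) =
      evalPair k H φ ψ (TensorProduct.map Coalgebra.comul LinearMap.id P) := by
  induction P using TensorProduct.induction_on with
  | zero => simp [PhiP]
  | tmul x y => simp [PhiP, conv, evalPair]
  | add x y hx hy => simpa [PhiP] using congrArg₂ (· + ·) hx hy

theorem PhiP_add_left (P Q : H ⊗[k] H) (φ : H →ₗ[k] k) :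
    PhiP k H (P + Q) φ = PhiP k H P φ + PhiP k H Q φ := by
  simp [PhiP]

/-- Taking the two copies of `P` independent makes both sides bilinear in `(P, Q)`, so that
pure tensors suffice. -/
theorem evalPair_lambdaT (a b c d : H) (P Q : H ⊗[k] H) (φ ψ : H →ₗ[k] k) :
    evalPair k H φ ψ (lambdaT k H (((a ⊗ₜ[k] b) ⊗ₜ[k] (c ⊗ₜ[k] d)) ⊗ₜ[k] (P ⊗ₜ[k] Q))) =
      PhiP k H P (bimodAct k H b a φ) * PhiP k H Q (bimodAct k H d c ψ) := by
  induction P using TensorProduct.induction_on with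
  | zero => simp [PhiP]
  | add x y hx hy =>
    simp only [TensorProduct.add_tmul, TensorProduct.tmul_add, map_add, PhiP_add_left, add_mul,
      hx, hy]
  | tmul x y =>
    induction Q using TensorProduct.induction_on with
    | zero => simp [PhiP]
    | add x y hx hy =>
      simp only [TensorProduct.tmul_add, map_add, PhiP_add_left, mul_add, hx, hy]
    | tmul z w =>
      simp [PhiP, bimodAct, evalPair, lambdaT, sandwichMul, mul_assoc, smul_smul, mul_comm]

theorem evalPair_lambdaT_mem (P : H ⊗[k] H) (T : (H ⊗[k] H) ⊗[k] (H ⊗[k] H))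
    (U U' : Submodule k (H →ₗ[k] k))
    (hU : ∀ φ ∈ U, ∀ a b : H, bimodAct k H a b φ ∈ U)
    (hU' : ∀ φ ∈ U', ∀ a b : H, bimodAct k H a b φ ∈ U')
    {φ ψ : H →ₗ[k] k} (hφ : φ ∈ U) (hψ : ψ ∈ U') :
    evalPair k H φ ψ (lambdaT k H (T ⊗ₜ[k] (P ⊗ₜ[k] P))) ∈ Submodule.span k
      {z : H | ∃ φ ∈ U, ∃ ψ ∈ U', z = PhiP k H P φ * PhiP k H P ψ} := by
  induction T using TensorProduct.induction_on with
  | zero => simp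
  | add x y hx hy =>
    simpa only [TensorProduct.add_tmul, map_add] using add_mem hx hy
  | tmul x y =>
    induction x using TensorProduct.induction_on with
    | zero => simp
    | add x x' hx hx' =>
      simpa only [TensorProduct.add_tmul, map_add] using add_mem hx hx'
    | tmul a b =>
      induction y using TensorProduct.induction_on with
      | zero => simp
      | add y y' hy hy' =>
        simpa only [TensorProduct.add_tmul, TensorProduct.tmul_add, map_add] using add_mem hy hy'
      | tmul c d =>
        rw [evalPair_lambdaT]
        exact Submodule.subset_span ⟨_, hU φ hφ b a, _, hU' ψ hψ d c, rfl⟩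

end

theorem stmt16 (k H : Type*) [Field k] [Ring H] [HopfAlgebra k H]
    (P : H ⊗[k] H) (T : (H ⊗[k] H) ⊗[k] (H ⊗[k] H))
    (hT : TensorProduct.map Coalgebra.comul LinearMap.id P =
      lambdaT k H (T ⊗ₜ[k] (P ⊗ₜ[k] P))) :
    ∀ U U' : Submodule k (H →ₗ[k] k),
      (∀ φ ∈ U, ∀ a b : H, bimodAct k H a b φ ∈ U) →
      (∀ φ ∈ U', ∀ a b : H, bimodAct k H a b φ ∈ U') →
      ∀ ξ ∈ Submodule.span k
          {χ : H →ₗ[k] k | ∃ φ ∈ U, ∃ ψ ∈ U', χ = conv k H φ ψ},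
        PhiP k H P ξ ∈ Submodule.span k
          {z : H | ∃ φ ∈ U, ∃ ψ ∈ U', z = PhiP k H P φ * PhiP k H P ψ} := by
  intro U U' hU hU' ξ hξ
  induction hξ using Submodule.span_induction with
  | mem χ h =>
    obtain ⟨φ, hφ, ψ, hψ, rfl⟩ := h
    rw [PhiP_conv, hT]
    exact evalPair_lambdaT_mem k H P T U U' hU hU' hφ hψ
  | zero => simp [PhiP]
  | add x y _ _ hx hy =>
    simpa [PhiP, TensorProduct.map_add_left] using add_mem hx hy
  | smul c x _ hx =>
    simpa [PhiP, TensorProduct.map_smul_left] using Submodule.smul_mem _ c hx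
end
end

section
/- Let H be a Hopf algebra over a field k, P = ΣP₁⊗P₂ ∈ H⊗H, and T = Σ t₁⊗t₂⊗t₃⊗t₄ ∈ H⊗H⊗H⊗H such that (Δ⊗id)(P) = Σ t₁P₁t₂ ⊗ t₃P₁'t₄ ⊗ P₂P₂' (where P = ΣP₁⊗P₂ = ΣP₁'⊗P₂' are two copies of P) and moreover Σ t₂t₁ ⊗ t₄t₃ = 1⊗1. Then for all trace forms ξ, ξ' ∈ H* (i.e., ξ(ab) = ξ(ba) and ξ'(ab) = ξ'(ba) for all a, b ∈ H), one has Φ_P(ξ * ξ') = Φ_P(ξ) · Φ_P(ξ'), where Φ_P(φ) = Σ φ(P₁)P₂ and * is the convolution product on H*. -/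
/-!
Apply `ξ ⊗ ξ' ⊗ id` to the hypothesis on `(Δ ⊗ id)(P)`. The left side becomes `Φ_P(ξ * ξ')`, and
the right side becomes `∑ ξ(t₁P₁t₂) ξ'(t₃P₁'t₄) P₂P₂'`. Cyclicity of the trace forms turns it into
`∑ ξ(t₂t₁P₁) ξ'(t₄t₃P₁') P₂P₂'`, which depends on `T` only through `∑ t₂t₁ ⊗ t₄t₃ = 1 ⊗ 1`
(`evalTwo_lambdaT`); hence it equals `∑ ξ(P₁) ξ'(P₁') P₂P₂' = Φ_P(ξ) Φ_P(ξ')`.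
-/

open TensorProduct

noncomputable section

/-- Opposite multiplication `a ⊗ b ↦ b * a` as a linear map. -/
def mulOp (k H : Type*) [Field k] [Ring H] [Algebra k H] : H ⊗[k] H →ₗ[k] H :=
  LinearMap.mul' k H ∘ₗ (TensorProduct.comm k H H).toLinearMap

/-- The map `ξ ⊗ ξ' ⊗ id`, that is, `(a ⊗ b) ⊗ c ↦ (ξ a * ξ' b) • c`. -/
def evalTwo (k H : Type*) [Field k] [Ring H] [Algebra k H] (ξ ξ' : H →ₗ[k] k) :
    (H ⊗[k] H) ⊗[k] H →ₗ[k] H :=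
  (TensorProduct.lid k H).toLinearMap ∘ₗ
    TensorProduct.map (LinearMap.mul' k k ∘ₗ TensorProduct.map ξ ξ') LinearMap.id

/-- The map `a ⊗ (p ⊗ q) ↦ ξ (a * p) • q`. -/
def twistEval (k H : Type*) [Field k] [Ring H] [Algebra k H] (ξ : H →ₗ[k] k) :
    H ⊗[k] (H ⊗[k] H) →ₗ[k] H :=
  (TensorProduct.lid k H).toLinearMap ∘ₗ
    TensorProduct.map (ξ ∘ₗ LinearMap.mul' k H) LinearMap.id ∘ₗ
    (TensorProduct.assoc k H H H).symm.toLinearMap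

theorem twistEval_one (k H : Type*) [Field k] [Ring H] [HopfAlgebra k H] (ξ : H →ₗ[k] k)
    (P : H ⊗[k] H) : twistEval k H ξ (1 ⊗ₜ[k] P) = PhiP k H P ξ := by
  induction P using TensorProduct.induction_on with
  | zero => simp [PhiP]
  | tmul x y => simp [PhiP, twistEval]
  | add x y hx hy => simpa [PhiP, TensorProduct.tmul_add] using congrArg₂ (· + ·) hx hy

theorem evalTwo_comul (k H : Type*) [Field k] [Ring H] [HopfAlgebra k H] (ξ ξ' : H →ₗ[k] k)
    (P : H ⊗[k] H) : evalTwo k H ξ ξ' (TensorProduct.map Coalgebra.comul LinearMap.id P) =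
      PhiP k H P (conv k H ξ ξ') := by
  induction P using TensorProduct.induction_on with
  | zero => simp [PhiP]
  | tmul x y => simp [PhiP, evalTwo, conv]
  | add x y hx hy => simpa [PhiP] using congrArg₂ (· + ·) hx hy

/-- For trace forms `ξ`, `ξ'`, applying `ξ ⊗ ξ' ⊗ id` to `lambdaT` sees the tensor
`t₁ ⊗ t₂ ⊗ t₃ ⊗ t₄` only through `t₂t₁ ⊗ t₄t₃`. -/
theorem evalTwo_lambdaT (k H : Type*) [Field k] [Ring H] [Algebra k H] (ξ ξ' : H →ₗ[k] k)
    (h : ∀ a b : H, ξ (a * b) = ξ (b * a)) (h' : ∀ a b : H, ξ' (a * b) = ξ' (b * a))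
    (T : (H ⊗[k] H) ⊗[k] (H ⊗[k] H)) (P Q : H ⊗[k] H) :
    evalTwo k H ξ ξ' (lambdaT k H (T ⊗ₜ[k] (P ⊗ₜ[k] Q))) =
      (LinearMap.mul' k H ∘ₗ TensorProduct.map (twistEval k H ξ) (twistEval k H ξ') ∘ₗ
        (tensorTensorTensorComm k H H (H ⊗[k] H) (H ⊗[k] H)).toLinearMap)
        (TensorProduct.map (mulOp k H) (mulOp k H) T ⊗ₜ[k] (P ⊗ₜ[k] Q)) := by
  -- Both sides are linear in `T ⊗ (P ⊗ Q)`, so pure tensors suffice.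
  suffices H' : evalTwo k H ξ ξ' ∘ₗ lambdaT k H =
      (LinearMap.mul' k H ∘ₗ TensorProduct.map (twistEval k H ξ) (twistEval k H ξ') ∘ₗ
        (tensorTensorTensorComm k H H (H ⊗[k] H) (H ⊗[k] H)).toLinearMap) ∘ₗ
        TensorProduct.map (TensorProduct.map (mulOp k H) (mulOp k H)) LinearMap.id from
    LinearMap.congr_fun H' (T ⊗ₜ[k] (P ⊗ₜ[k] Q))
  ext a b c d p q p' q'
  have e : ξ (a * p * b) = ξ (b * a * p) := by rw [h, mul_assoc]
  have e' : ξ' (c * p' * d) = ξ' (d * c * p') := by rw [h', mul_assoc]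
  simp [evalTwo, lambdaT, sandwichMul, twistEval, mulOp, e, e', mul_smul, smul_comm (ξ _) (ξ' _)]

theorem stmt17 (k H : Type*) [Field k] [Ring H] [HopfAlgebra k H]
    (P : H ⊗[k] H) (T : (H ⊗[k] H) ⊗[k] (H ⊗[k] H))
    (hT : TensorProduct.map Coalgebra.comul LinearMap.id P =
      lambdaT k H (T ⊗ₜ[k] (P ⊗ₜ[k] P)))
    (hT1 : TensorProduct.map (mulOp k H) (mulOp k H) T = 1 ⊗ₜ[k] 1) :
    ∀ ξ ξ' : H →ₗ[k] k,
      (∀ a b : H, ξ (a * b) = ξ (b * a)) →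
      (∀ a b : H, ξ' (a * b) = ξ' (b * a)) →
      PhiP k H P (conv k H ξ ξ') = PhiP k H P ξ * PhiP k H P ξ' := by
  intro ξ ξ' h h'
  rw [← evalTwo_comul, hT, evalTwo_lambdaT k H ξ ξ' h h', hT1]
  simp [twistEval_one]
end
end
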